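/- Consider P(Z; M, β) = (Z−1)³·(Z²+3Z+6)/60 + (M/9)·(5Z²−16Z+20) + (β/2)·(Z−1)². For every M > 0 and β ∈ ℝ, the polynomial Z ↦ P(Z; M, β) has exactly one root Z₀(M, β) in the half-line {Z ≤ 1}. Moreover, there exists a constant c₀ > 0, independent of M and β, such that for all M > 0 and β ∈ ℝ, if Z₀(M, β) ≥ −1 then ∂P/∂Z(Z₀(M, β); M, β) ≥ c₀·max{M^{2/3}, M}. -/

import Mathlib

/-!
A root of `P M β` at distance `w > 0` to the left of `1` determines `β`: since `β` enters `P`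
only through `(β / 2) * w ^ 2`, one has `P M β (1 - w) = w ^ 2 / 2 * (β - b w)` for an explicit
rational function `b`, the same for all `β`. As `b` increases strictly from `-∞` to `+∞` on
`(0, ∞)`, it takes the value `β` exactly once. At the root the factor `β - b w` vanishes, so the
product rule gives
`∂P/∂Z = w ^ 2 / 2 * b' w = w ^ 2 * (3 * w ^ 2 - 10 * w + 10) / 60 + 2 * M / w + 2 * M / 3`.
The last term controls `M`, and the first two control `M ^ (2 / 3)` by the weighted AM-GM
inequality.
-/

/-- The fifth-order polynomial `P(Z; M, β)` solving `P''' = Z²` with `P(1; M, β) = M`. -/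
noncomputable def P (M β Z : ℝ) : ℝ :=
  (Z - 1) ^ 3 * (Z ^ 2 + 3 * Z + 6) / 60 + (M / 9) * (5 * Z ^ 2 - 16 * Z + 20)
    + (β / 2) * (Z - 1) ^ 2

open Filter Set Topology

variable {M β w Z : ℝ}

/-- The value of `β` for which `P M β` has a root at distance `w` to the left of `1`: the function
`b` whose monotonicity counts the roots. It has a pole at `w = 0`, where its value is junk. -/
noncomputable def rootBeta (M w : ℝ) : ℝ :=
  w * (w ^ 2 - 5 * w + 10) / 30 - 2 * M * (w⁻¹ ^ 2 + 2 / 3 * w⁻¹ + 5 / 9)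

theorem P_one : P M β 1 = M := by
  unfold P; ring

theorem P_one_sub (hw : w ≠ 0) : P M β (1 - w) = w ^ 2 / 2 * (β - rootBeta M w) := by
  unfold P rootBeta
  field_simp
  ring

theorem le_one_and_P_eq_zero_iff (hM : M ≠ 0) :
    Z ≤ 1 ∧ P M β Z = 0 ↔ 0 < 1 - Z ∧ rootBeta M (1 - Z) = β := by
  obtain rfl | hZ := eq_or_ne Z 1
  · simp [P_one, hM]
  · have hw : 1 - Z ≠ 0 := sub_ne_zero.2 hZ.symm
    have hP : P M β Z = (1 - Z) ^ 2 / 2 * (β - rootBeta M (1 - Z)) := by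
      rw [← P_one_sub hw, sub_sub_cancel]
    rw [hP, mul_eq_zero_iff_left (by positivity), sub_eq_zero, eq_comm (a := β), hZ.le_iff_lt,
      sub_pos]

theorem hasDerivAt_rootBeta (hw : w ≠ 0) :
    HasDerivAt (rootBeta M)
      ((3 * w ^ 2 - 10 * w + 10) / 30 + M * (4 / w ^ 3 + 4 / (3 * w ^ 2))) w := by
  have hid := hasDerivAt_id' w
  have hinv := hasDerivAt_inv hw
  have h := ((hid.mul (((hid.pow 2).sub (hid.const_mul 5)).add_const 10)).div_const 30).sub
    ((((hinv.pow 2).add (hinv.const_mul (2 / 3))).add_const (5 / 9)).const_mul (2 * M))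
  refine h.congr_deriv ?_
  simp only [Pi.sub_apply, Pi.pow_apply, Nat.cast_ofNat, Nat.add_one_sub_one, pow_one]
  field_simp
  ring

theorem hasDerivAt_P_rootBeta (hw : w ≠ 0) :
    HasDerivAt (P M (rootBeta M w))
      (w ^ 2 * (3 * w ^ 2 - 10 * w + 10) / 60 + 2 * (M / w) + 2 * M / 3) (1 - w) := by
  have hfactor : P M (rootBeta M w) =ᶠ[𝓝 (1 - w)]
      fun Z ↦ (1 - Z) ^ 2 / 2 * (rootBeta M w - rootBeta M (1 - Z)) := by
    filter_upwards [isOpen_ne.mem_nhds (show 1 - w ≠ 1 by simpa using hw)] with Z hZ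
    rw [← P_one_sub (sub_ne_zero.2 hZ.symm), sub_sub_cancel]
  have hsub : HasDerivAt (fun Z : ℝ ↦ 1 - Z) (-1) (1 - w) := (hasDerivAt_id' _).const_sub 1
  have hb : HasDerivAt (fun Z ↦ rootBeta M (1 - Z)) _ (1 - w) :=
    HasDerivAt.comp_const_sub 1 (1 - w) (by
      rw [sub_sub_cancel]
      exact hasDerivAt_rootBeta hw)
  refine ((((hsub.pow 2).div_const 2).mul (hb.const_sub _)).congr_of_eventuallyEq
    hfactor).congr_deriv ?_
  simp only [Pi.pow_apply, Nat.cast_ofNat, Nat.add_one_sub_one, pow_one, sub_sub_cancel, sub_self]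
  field_simp
  ring

theorem five_thirds_le_quadratic (w : ℝ) : 5 / 3 ≤ 3 * w ^ 2 - 10 * w + 10 := by
  nlinarith [sq_nonneg (w - 5 / 3)]

theorem continuousOn_rootBeta : ContinuousOn (rootBeta M) (Ioi 0) := fun _ hw ↦
  (hasDerivAt_rootBeta (ne_of_gt hw)).continuousAt.continuousWithinAt

theorem strictMonoOn_rootBeta (hM : 0 ≤ M) : StrictMonoOn (rootBeta M) (Ioi 0) := by
  refine strictMonoOn_of_deriv_pos (convex_Ioi 0) continuousOn_rootBeta fun w hw ↦ ?_
  rw [interior_Ioi] at hw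
  have hw : 0 < w := hw
  rw [(hasDerivAt_rootBeta hw.ne').deriv]
  have hquadratic : 0 < 3 * w ^ 2 - 10 * w + 10 := by linarith [five_thirds_le_quadratic w]
  positivity

theorem tendsto_rootBeta_atTop : Tendsto (rootBeta M) atTop atTop := by
  have hcubic : Tendsto (fun w : ℝ ↦ w * (w ^ 2 - 5 * w + 10) / 30) atTop atTop := by
    refine tendsto_atTop_mono' _ ?_ (tendsto_id.atTop_div_const (by norm_num : (0 : ℝ) < 8))
    filter_upwards [eventually_ge_atTop 0] with w hw
    have hquadratic : 15 / 4 ≤ w ^ 2 - 5 * w + 10 := by nlinarith [sq_nonneg (w - 5 / 2)]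
    rw [id_eq]
    linarith [mul_le_mul_of_nonneg_left hquadratic hw]
  have hinv : Tendsto (fun w : ℝ ↦ w⁻¹) atTop (𝓝 0) := tendsto_inv_atTop_zero
  have hrest := (((hinv.pow 2).add (hinv.const_mul (2 / 3))).add_const (5 / 9)).const_mul (2 * M)
  exact hcubic.atTop_add hrest.neg

theorem tendsto_rootBeta_nhdsGT_zero (hM : 0 < M) : Tendsto (rootBeta M) (𝓝[>] 0) atBot := by
  have hcubic : Tendsto (fun w : ℝ ↦ w * (w ^ 2 - 5 * w + 10) / 30) (𝓝[>] 0) (𝓝 0) :=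
    ((by fun_prop : Continuous fun w : ℝ ↦ w * (w ^ 2 - 5 * w + 10) / 30).tendsto'
      0 0 (by norm_num)).mono_left nhdsWithin_le_nhds
  have hinv : Tendsto (fun w : ℝ ↦ w⁻¹) (𝓝[>] 0) atTop := tendsto_inv_nhdsGT_zero
  have hpole : Tendsto (fun w : ℝ ↦ 2 * M * (w⁻¹ ^ 2 + 2 / 3 * w⁻¹ + 5 / 9)) (𝓝[>] 0) atTop :=
    ((((tendsto_pow_atTop two_ne_zero).comp hinv).atTop_add_atTop
      (hinv.const_mul_atTop (by norm_num))).atTop_add tendsto_const_nhds).const_mul_atTop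
        (by positivity)
  exact hcubic.add_atBot (tendsto_neg_atTop_atBot.comp hpole)

theorem bijOn_rootBeta (hM : 0 < M) : BijOn (rootBeta M) (Ioi 0) univ :=
  ⟨mapsTo_univ _ _, (strictMonoOn_rootBeta hM.le).injOn,
    isPreconnected_Ioi.intermediate_value_Iii (l₁ := 𝓝[>] 0) inf_le_right
      (le_principal_iff.2 (Ioi_mem_atTop 0)) continuousOn_rootBeta
      (tendsto_rootBeta_nhdsGT_zero hM) tendsto_rootBeta_atTop⟩

theorem existsUnique_root (hM : 0 < M) (β : ℝ) : ∃! Z : ℝ, Z ≤ 1 ∧ P M β Z = 0 := by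
  simp only [le_one_and_P_eq_zero_iff hM.ne']
  obtain ⟨w, hw, hβ⟩ := (bijOn_rootBeta hM).surjOn (mem_univ β)
  refine ⟨1 - w, by simpa using ⟨hw, hβ⟩, fun Z ⟨hZ, hZβ⟩ ↦ ?_⟩
  have : 1 - Z = w := (bijOn_rootBeta hM).injOn hZ hw (hZβ.trans hβ.symm)
  linarith

theorem rpow_two_thirds_le_sq_add_div (hM : 0 ≤ M) (hw : 0 < w) :
    M ^ ((2 : ℝ) / 3) ≤ (w ^ 2 + 2 * (M / w)) / 3 := by
  have hfactor : M ^ ((2 : ℝ) / 3) = (w ^ 2) ^ ((1 : ℝ) / 3) * (M / w) ^ ((2 : ℝ) / 3) := by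
    have hsq : (w ^ 2) ^ ((1 : ℝ) / 3) = w ^ ((2 : ℝ) / 3) := by
      rw [← Real.rpow_natCast_mul hw.le]; norm_num
    rw [hsq, ← Real.mul_rpow hw.le (by positivity), mul_div_cancel₀ _ hw.ne']
  calc M ^ ((2 : ℝ) / 3) = (w ^ 2) ^ ((1 : ℝ) / 3) * (M / w) ^ ((2 : ℝ) / 3) := hfactor
    _ ≤ 1 / 3 * w ^ 2 + 2 / 3 * (M / w) :=
      Real.geom_mean_le_arith_mean2_weighted (by norm_num) (by norm_num) (by positivity)
        (by positivity) (by norm_num)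
    _ = (w ^ 2 + 2 * (M / w)) / 3 := by ring

theorem mul_max_le_deriv_P_of_root (hM : 0 < M) (hZ : Z ≤ 1) (hP : P M β Z = 0) :
    1 / 12 * max (M ^ ((2 : ℝ) / 3)) M ≤ deriv (P M β) Z := by
  obtain ⟨hw, rfl⟩ := (le_one_and_P_eq_zero_iff hM.ne').1 ⟨hZ, hP⟩
  obtain ⟨w, rfl⟩ : ∃ w, Z = 1 - w := ⟨1 - Z, by ring⟩
  rw [sub_sub_cancel] at hw ⊢
  have hquartic : w ^ 2 * (5 / 3) ≤ w ^ 2 * (3 * w ^ 2 - 10 * w + 10) := by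
    gcongr; exact five_thirds_le_quadratic w
  have hrpow := rpow_two_thirds_le_sq_add_div hM.le hw
  have hdiv : 0 < M / w := by positivity
  have hsq : 0 < w ^ 2 := by positivity
  rw [(hasDerivAt_P_rootBeta hw.ne').deriv, mul_max_of_nonneg _ _ (by norm_num)]
  exact max_le (by linarith) (by linarith)

theorem unique_root_and_derivative_bound_general :
    (∀ M : ℝ, 0 < M → ∀ β : ℝ, ∃! Z : ℝ, Z ≤ 1 ∧ P M β Z = 0) ∧
    (∃ c₀ : ℝ, 0 < c₀ ∧ ∀ M : ℝ, 0 < M → ∀ β Z₀ : ℝ,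
      Z₀ ≤ 1 → P M β Z₀ = 0 →
      c₀ * max (M ^ ((2 : ℝ) / 3)) M ≤ deriv (P M β) Z₀) :=
  ⟨fun _ hM β ↦ existsUnique_root hM β,
    1 / 12, by norm_num, fun _ hM _ _ hZ hP ↦ mul_max_le_deriv_P_of_root hM hZ hP⟩

/-- for every `M > 0` and `β ∈ ℝ`, `P(·; M, β)` has exactly one root in
`{Z ≤ 1}`; and there is a universal constant `c₀ > 0` such that whenever this root `Z₀`
satisfies `Z₀ ≥ -1`, one has `∂P/∂Z(Z₀; M, β) ≥ c₀ · max(M^{2/3}, M)`. -/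
theorem unique_root_and_derivative_bound :
    (∀ M : ℝ, 0 < M → ∀ β : ℝ, ∃! Z : ℝ, Z ≤ 1 ∧ P M β Z = 0) ∧
    (∃ c₀ : ℝ, 0 < c₀ ∧ ∀ M : ℝ, 0 < M → ∀ β Z₀ : ℝ,
      Z₀ ≤ 1 → P M β Z₀ = 0 → -1 ≤ Z₀ →
      c₀ * max (M ^ ((2 : ℝ) / 3)) M ≤ deriv (P M β) Z₀) :=
  let ⟨hroot, c₀, hc₀, hbound⟩ := unique_root_and_derivative_bound_general
  ⟨hroot, c₀, hc₀, fun M hM β Z₀ hZ hP _ ↦ hbound M hM β Z₀ hZ hP⟩
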